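/- Suppose F satisfies (G1) and (G2) and the Perron–Frobenius operator P_σ of the base shift has spectral gap on d_θ-Lipschitz functions. Let μ₀ be the unique F-invariant probability measure in S^∞. Then μ₀ ∈ L_θ^+ and its Lipschitz disintegration constant satisfies |μ₀|_θ ≤ C₁/(1−θ), where C₁ = max{Hθ + θN|g|_θ, 2}. -/

import Mathlib

open MeasureTheory ENNReal Set

namespace RDS

/-- The one-sided subshift of finite type `Σ_A^+` determined by the 0-1 matrix `A`. -/
abbrev SigmaA (N : ℕ) (A : Fin N → Fin N → Bool) :=
  {x : ℕ → Fin N // ∀ i, A (x i) (x (i + 1)) = true}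

variable {N : ℕ} {A : Fin N → Fin N → Bool}

/-- The shift map `σ` on `Σ_A^+`. -/
def shift (x : SigmaA N A) : SigmaA N A :=
  ⟨fun i => x.val (i + 1), fun i => x.prop (i + 1)⟩

/-- Aperiodicity of a 0-1 matrix: some power has all entries positive. -/
def Aperiodic (A : Fin N → Fin N → Bool) : Prop :=
  ∃ k : ℕ, 0 < k ∧ ∀ i j,
    0 < ((Matrix.of fun a b => if A a b then (1 : ℕ) else 0) ^ k) i j

/-- The metric `d_θ(x,y) = Σ_i θ^i (1 - δ(x_i, y_i))` on `Σ_A^+`. -/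
noncomputable def dTheta (θ : ℝ) (x y : SigmaA N A) : ℝ :=
  ∑' i : ℕ, θ ^ i * (if x.val i = y.val i then (0 : ℝ) else 1)

/-- Cylinder sets of `Σ_A^+`. -/
def cylinder (n : ℕ) (w : Fin (n + 1) → Fin N) : Set (SigmaA N A) :=
  {x | ∀ i : Fin (n + 1), x.val i = w i}

/-- `m` is a Markov measure on `Σ_A^+` compatible with `A`: it is given on
cylinders by a stochastic matrix `P` (vanishing where `A` vanishes) and a
stationary probability vector `p`. -/
def IsMarkov (m : Measure (SigmaA N A)) : Prop :=
  ∃ (p : Fin N → ℝ≥0∞) (P : Fin N → Fin N → ℝ≥0∞),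
    (∑ i, p i = 1) ∧ (∀ i, ∑ j, P i j = 1) ∧ (∀ j, ∑ i, p i * P i j = p j) ∧
    (∀ i j, A i j = false → P i j = 0) ∧
    ∀ (n : ℕ) (w : Fin (n + 1) → Fin N),
      m (cylinder n w) = p (w 0) * ∏ i : Fin n, P (w i.castSucc) (w i.succ)

/-- `σ_i⁻¹(γ)`: the sequence `γ` with the symbol `i` prepended
(defined when `A i γ₀ = 1`), i.e. the inverse branch of the restriction `σ_i`
of `σ` to the cylinder `[i]`. -/
def prepend (i : Fin N) (x : SigmaA N A) (h : A i (x.val 0) = true) : SigmaA N A :=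
  ⟨fun n => match n with
    | 0 => i
    | Nat.succ k => x.val k,
   fun j => match j with
    | 0 => h
    | Nat.succ k => x.prop k⟩

/-- `f` is `L`-Lipschitz with respect to the distance function `d`. -/
def LipWithD {X : Type*} (d : X → X → ℝ) (L : ℝ) (f : X → ℝ) : Prop :=
  ∀ x y, |f x - f y| ≤ L * d x y

/-- `f` is Lipschitz with respect to the distance function `d`. -/
def LipD {X : Type*} (d : X → X → ℝ) (f : X → ℝ) : Prop :=
  ∃ L : ℝ, LipWithD d L f

/-- The best Lipschitz constant of `f` with respect to `d` (valued in `ℝ≥0∞`). -/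
noncomputable def lipConst {X : Type*} (d : X → X → ℝ) (f : X → ℝ) : ℝ≥0∞ :=
  ⨆ (x : X) (y : X), ENNReal.ofReal (|f x - f y| / d x y)

/-- The sup norm of `f` (valued in `ℝ≥0∞`). -/
noncomputable def supNormE {X : Type*} (f : X → ℝ) : ℝ≥0∞ :=
  ⨆ x : X, ENNReal.ofReal |f x|

/-- The norm `‖f‖_θ = ‖f‖_∞ + Lip_d(f)`. -/
noncomputable def thetaNorm {X : Type*} (d : X → X → ℝ) (f : X → ℝ) : ℝ≥0∞ :=
  supNormE f + lipConst d f

/-- The Perron-Frobenius operator duality characterizing `P_σ`: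
`∫ P_σ(φ) · ψ dm = ∫ φ · (ψ ∘ σ) dm` for integrable `φ` and bounded measurable `ψ`. -/
def IsPerronFrobenius (m : Measure (SigmaA N A))
    (Pσ : (SigmaA N A → ℝ) → SigmaA N A → ℝ) : Prop :=
  ∀ φ ψ : SigmaA N A → ℝ, Integrable φ m → Measurable ψ → (∃ C, ∀ x, |ψ x| ≤ C) →
    ∫ x, Pσ φ x * ψ x ∂m = ∫ x, φ x * ψ (shift x) ∂m

/-- Spectral gap for `P_σ` on `d_θ`-Lipschitz functions with constants `D`, `r`:
`‖P_σ^n φ‖_θ ≤ D r^n ‖φ‖_θ` for all `n` and all `d_θ`-Lipschitz `φ` with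
`∫ φ dm = 0`. -/
def HasGap (m : Measure (SigmaA N A)) (θ : ℝ)
    (Pσ : (SigmaA N A → ℝ) → SigmaA N A → ℝ) (D r : ℝ) : Prop :=
  ∀ φ : SigmaA N A → ℝ, LipD (dTheta θ) φ → (∫ x, φ x ∂m) = 0 →
    ∀ n : ℕ, thetaNorm (dTheta θ) (Pσ^[n] φ) ≤
      ENNReal.ofReal (D * r ^ n) * thetaNorm (dTheta θ) φ

/-- `Jm i` is the Jacobian `J_{m,σ_i}` of `m` with respect to the branch `σ_i`
(the restriction of `σ` to the cylinder `[i]`): `m (σ_i(E)) = ∫_E J_{m,σ_i} dm`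
for every measurable `E` (intersected with `[i]`). -/
def IsJacobian (m : Measure (SigmaA N A)) (Jm : Fin N → SigmaA N A → ℝ) : Prop :=
  ∀ (i : Fin N) (E : Set (SigmaA N A)), MeasurableSet E →
    m {γ : SigmaA N A | ∃ h : A i (γ.val 0) = true, prepend i γ h ∈ E} =
      ∫⁻ x in E ∩ {x : SigmaA N A | x.val 0 = i}, ENNReal.ofReal (Jm i x) ∂m

variable {K : Type*} [MetricSpace K] [MeasurableSpace K]

/-- The Wasserstein-Kantorovich like distance `W(ν₁,ν₂)`: the supremum of
`|∫ g dν₁ - ∫ g dν₂|` over `g : K → ℝ` with `Lip(g) ≤ 1` and `‖g‖_∞ ≤ 1`.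
Applied with `ν₂ = 0` it gives the norm `‖ν₁‖_W`; applied to the two parts of a
decomposition of a signed measure it gives its `‖·‖_W` norm. -/
noncomputable def wDist (ν₁ ν₂ : Measure K) : ℝ≥0∞ :=
  ⨆ g : {g : K → ℝ // LipschitzWith 1 g ∧ ∀ z, |g z| ≤ 1},
    ENNReal.ofReal |∫ z, g.val z ∂ν₁ - ∫ z, g.val z ∂ν₂|

/-- The skew product `F(x,z) = (σ(x), G(x,z))`. -/
def skew (G : SigmaA N A × K → K) (p : SigmaA N A × K) : SigmaA N A × K :=
  (shift p.1, G p)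

/-- The transfer operator `F^* μ (E) = μ (F⁻¹ E)` acting on signed measures. -/
noncomputable def transfer (G : SigmaA N A × K → K)
    (μ : SignedMeasure (SigmaA N A × K)) : SignedMeasure (SigmaA N A × K) :=
  μ.map (skew G)

/-- Condition (G1): uniform contraction of the vertical fibers with rate `α`. -/
def CondG1 (G : SigmaA N A × K → K) (α : ℝ) : Prop :=
  ∀ (x : SigmaA N A) (z₁ z₂ : K), dist (G (x, z₁)) (G (x, z₂)) ≤ α * dist z₁ z₂

/-- Condition (G2): `x ↦ G(x,z)` is `d_θ`-Lipschitz with constant `H`,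
uniformly in `z`. -/
def CondG2 (θ : ℝ) (G : SigmaA N A × K → K) (H : ℝ) : Prop :=
  ∀ (z : K) (x y : SigmaA N A), dist (G (x, z)) (G (y, z)) ≤ H * dTheta θ x y

/-- `T` is (the path `γ ↦ μ|_γ` of) a disintegration of `μ` along the vertical
fibers, over the reference measure `m`: `μ(E) = ∫ (μ|_γ)(E ∩ γ) dm(γ)`. -/
def IsDisint (m : Measure (SigmaA N A)) (μ : Measure (SigmaA N A × K))
    (T : SigmaA N A → Measure K) : Prop :=
  (∀ E : Set (SigmaA N A × K), MeasurableSet E →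
      μ E = ∫⁻ γ, T γ {z | (γ, z) ∈ E} ∂m) ∧
  ∀ E : Set K, MeasurableSet E → Measurable fun γ => T γ E

/-- The (essential) `‖·‖_W`-Lipschitz constant of a path of measures,
`|Γ|_θ^ω = ess sup_{γ₁ ≠ γ₂} ‖Γ(γ₁) - Γ(γ₂)‖_W / d_θ(γ₁,γ₂)`. -/
noncomputable def pathLip (m : Measure (SigmaA N A)) (θ : ℝ)
    (T : SigmaA N A → Measure K) : ℝ≥0∞ :=
  essSup (fun p : SigmaA N A × SigmaA N A =>
    wDist (T p.1) (T p.2) / ENNReal.ofReal (dTheta θ p.1 p.2)) (m.prod m)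

/-- The Lipschitz constant `|μ|_θ` of a positive measure: the infimum over
disintegrations `ω` of `μ` of `|μ|_θ^ω`. -/
noncomputable def lipDisint (m : Measure (SigmaA N A)) (θ : ℝ)
    (μ : Measure (SigmaA N A × K)) : ℝ≥0∞ :=
  ⨅ T : {T : SigmaA N A → Measure K // IsDisint m μ T}, pathLip m θ T.val

/-- The fiberwise transfer formula: the path representing `F^*μ` induced by the
path `T` representing `μ`, i.e.
`γ ↦ Σ_i 1_{σ([i])}(γ) (F_{iγ})_*(T(iγ)) / J_{m,σ_i}(iγ)`. -/
noncomputable def transferPath (G : SigmaA N A × K → K) (Jm : Fin N → SigmaA N A → ℝ)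
    (T : SigmaA N A → Measure K) : SigmaA N A → Measure K :=
  fun γ => ∑ i : Fin N, if h : A i (γ.val 0) = true then
      ENNReal.ofReal ((Jm i (prepend i γ h))⁻¹) •
        ((T (prepend i γ h)).map fun z => G (prepend i γ h, z))
    else 0

variable [BorelSpace K] [CompactSpace K] [Nonempty K]

/-- The fiberwise restriction `μ|_γ = π₂_* (φ₁(γ) μ_γ)` of a finite positive
measure `μ` on `Σ_A^+ × K`, where `({μ_γ}_γ, φ₁ m)` is the Rokhlin
disintegration of `μ` along the vertical fibers and `φ₁ = d(π₁_*μ)/dm`. -/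
noncomputable def fiberR (m : Measure (SigmaA N A))
    (μ : Measure (SigmaA N A × K)) (γ : SigmaA N A) : Measure K := by
  by_cases h : IsFiniteMeasure μ
  · haveI := h
    exact (μ.fst.rnDeriv m γ) • μ.condKernel γ
  · exact 0

/-- The norm `‖μ‖_∞ = ess sup_γ ‖μ|_γ‖_W` of a signed measure written as a
difference `μ = μ₁ - μ₂` of positive measures. -/
noncomputable def infNormPair (m : Measure (SigmaA N A))
    (μ₁ μ₂ : Measure (SigmaA N A × K)) : ℝ≥0∞ :=
  essSup (fun γ => wDist (fiberR m μ₁ γ) (fiberR m μ₂ γ)) m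

/-- The marginal density `φ₁ = d(π₁_*μ)/dm` of the signed measure `μ = μ₁ - μ₂`. -/
noncomputable def phiPair (m : Measure (SigmaA N A))
    (μ₁ μ₂ : Measure (SigmaA N A × K)) (γ : SigmaA N A) : ℝ :=
  (μ₁.fst.rnDeriv m γ).toReal - (μ₂.fst.rnDeriv m γ).toReal

/-- Membership in `AB`: both parts are finite with first marginal absolutely
continuous with respect to `m`. -/
def MemABPair (m : Measure (SigmaA N A)) (μ₁ μ₂ : Measure (SigmaA N A × K)) : Prop :=
  μ₁.fst ≪ m ∧ μ₂.fst ≪ m ∧ IsFiniteMeasure μ₁ ∧ IsFiniteMeasure μ₂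

/-- Membership in `S^∞`: `μ ∈ AB`, `‖μ‖_∞ < ∞` and the marginal density `φ₁`
has a `d_θ`-Lipschitz version. -/
def MemSPair (m : Measure (SigmaA N A)) (θ : ℝ)
    (μ₁ μ₂ : Measure (SigmaA N A × K)) : Prop :=
  MemABPair m μ₁ μ₂ ∧ infNormPair m μ₁ μ₂ < ⊤ ∧
    ∃ ψ : SigmaA N A → ℝ, ψ =ᵐ[m] phiPair m μ₁ μ₂ ∧ LipD (dTheta θ) ψ

/-- `‖φ₁‖_θ`, computed on the best version of the marginal density. -/
noncomputable def thetaNormMu (m : Measure (SigmaA N A)) (θ : ℝ)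
    (μ₁ μ₂ : Measure (SigmaA N A × K)) : ℝ≥0∞ :=
  ⨅ ψ : {ψ : SigmaA N A → ℝ // ψ =ᵐ[m] phiPair m μ₁ μ₂}, thetaNorm (dTheta θ) ψ.val

/-- The norm `‖μ‖_{S^∞} = ‖φ₁‖_θ + ‖μ‖_∞`. -/
noncomputable def sNormPair (m : Measure (SigmaA N A)) (θ : ℝ)
    (μ₁ μ₂ : Measure (SigmaA N A × K)) : ℝ≥0∞ :=
  thetaNormMu m θ μ₁ μ₂ + infNormPair m μ₁ μ₂

/-- Positive part of a signed measure. -/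
noncomputable def jPos {X : Type*} [MeasurableSpace X] (μ : SignedMeasure X) : Measure X :=
  μ.toJordanDecomposition.posPart

/-- Negative part of a signed measure. -/
noncomputable def jNeg {X : Type*} [MeasurableSpace X] (μ : SignedMeasure X) : Measure X :=
  μ.toJordanDecomposition.negPart

/-- Membership in `AB` for signed measures. -/
def MemAB (m : Measure (SigmaA N A)) (μ : SignedMeasure (SigmaA N A × K)) : Prop :=
  MemABPair m (jPos μ) (jNeg μ)

/-- Membership in `S^∞` for signed measures. -/
def MemS (m : Measure (SigmaA N A)) (θ : ℝ) (μ : SignedMeasure (SigmaA N A × K)) : Prop :=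
  MemSPair m θ (jPos μ) (jNeg μ)

/-- `‖μ‖_∞` for signed measures. -/
noncomputable def infNorm (m : Measure (SigmaA N A))
    (μ : SignedMeasure (SigmaA N A × K)) : ℝ≥0∞ :=
  infNormPair m (jPos μ) (jNeg μ)

/-- `‖μ‖_{S^∞}` for signed measures. -/
noncomputable def sNorm (m : Measure (SigmaA N A)) (θ : ℝ)
    (μ : SignedMeasure (SigmaA N A × K)) : ℝ≥0∞ :=
  sNormPair m θ (jPos μ) (jNeg μ)

/-- `‖φ₁‖_∞` of the marginal density of a signed measure. -/
noncomputable def phiSup (m : Measure (SigmaA N A))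
    (μ : SignedMeasure (SigmaA N A × K)) : ℝ≥0∞ :=
  essSup (fun γ => ENNReal.ofReal |phiPair m (jPos μ) (jNeg μ) γ|) m

theorem dT_term_nonneg {θ : ℝ} (h0 : 0 < θ) (x y : SigmaA N A) (i : ℕ) :
    0 ≤ θ ^ i * (if x.val i = y.val i then (0 : ℝ) else 1) := by
  split_ifs <;> positivity

theorem dT_term_le {θ : ℝ} (h0 : 0 < θ) (x y : SigmaA N A) (i : ℕ) :
    θ ^ i * (if x.val i = y.val i then (0 : ℝ) else 1) ≤ θ ^ i := by
  have : 0 < θ ^ i := by positivity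
  split_ifs <;> simp [this.le]

theorem dT_summable {θ : ℝ} (h0 : 0 < θ) (h1 : θ < 1) (x y : SigmaA N A) :
    Summable fun i : ℕ => θ ^ i * (if x.val i = y.val i then (0 : ℝ) else 1) :=
  Summable.of_nonneg_of_le (dT_term_nonneg h0 x y) (dT_term_le h0 x y)
    (summable_geometric_of_lt_one h0.le h1)

theorem dT_nonneg {θ : ℝ} (h0 : 0 < θ) (x y : SigmaA N A) : 0 ≤ dTheta θ x y :=
  tsum_nonneg (dT_term_nonneg h0 x y)

theorem dT_self {θ : ℝ} (x : SigmaA N A) : dTheta θ x x = 0 := by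
  simp [dTheta]

theorem dT_pos {θ : ℝ} (h0 : 0 < θ) (h1 : θ < 1) {x y : SigmaA N A} (h : x ≠ y) :
    0 < dTheta θ x y := by
  obtain ⟨i, hi⟩ : ∃ i, x.val i ≠ y.val i := by
    by_contra! hc
    exact h (Subtype.ext (funext hc))
  have := (dT_summable h0 h1 x y).le_tsum i (fun j _ => dT_term_nonneg h0 x y j)
  simp only [hi, if_false, mul_one] at this
  exact lt_of_lt_of_le (by positivity) this

theorem dT_one_le {θ : ℝ} (h0 : 0 < θ) (h1 : θ < 1) {x y : SigmaA N A}
    (h : x.val 0 ≠ y.val 0) : 1 ≤ dTheta θ x y := by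
  have := (dT_summable h0 h1 x y).le_tsum 0 (fun j _ => dT_term_nonneg h0 x y j)
  simp only [h, if_false, mul_one, pow_zero] at this
  exact this

theorem dT_prepend {θ : ℝ} (h0 : 0 < θ) (h1 : θ < 1) (i : Fin N) {x y : SigmaA N A}
    (hx : A i (x.val 0) = true) (hy : A i (y.val 0) = true) :
    dTheta θ (prepend i x hx) (prepend i y hy) = θ * dTheta θ x y := by
  unfold dTheta
  rw [(dT_summable h0 h1 (prepend i x hx) (prepend i y hy)).tsum_eq_zero_add, ← tsum_mul_left]
  simp only [prepend, if_true, mul_zero, zero_add]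
  refine tsum_congr fun j => ?_
  by_cases hj : x.val j = y.val j
  · simp [hj]
  · simp only [hj, if_false, mul_one]; rw [pow_succ]; ring

theorem dT_le_of_agree {θ : ℝ} (h0 : 0 < θ) (h1 : θ < 1) (n : ℕ) {x y : SigmaA N A}
    (h : ∀ i < n, x.val i = y.val i) : dTheta θ x y ≤ θ ^ n / (1 - θ) := by
  unfold dTheta
  have hs := dT_summable h0 h1 x y
  rw [← hs.sum_add_tsum_nat_add n, Finset.sum_eq_zero, zero_add]
  · rw [div_eq_mul_inv, ← tsum_geometric_of_lt_one h0.le h1, ← tsum_mul_left]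
    have hs' : Summable fun j : ℕ =>
        θ ^ (j + n) * (if x.val (j + n) = y.val (j + n) then (0 : ℝ) else 1) :=
      (summable_nat_add_iff n (f := fun i : ℕ =>
        θ ^ i * (if x.val i = y.val i then (0 : ℝ) else 1))).2 hs
    have hg : Summable fun j : ℕ => θ ^ n * θ ^ j :=
      (summable_geometric_of_lt_one h0.le h1).mul_left _
    refine Summable.tsum_le_tsum (fun j => ?_) hs' hg
    refine (dT_term_le h0 x y (j + n)).trans (le_of_eq ?_)
    rw [pow_add, mul_comm]
  · intro i hi
    simp [h i (Finset.mem_range.1 hi)]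

theorem dT_le {θ : ℝ} (h0 : 0 < θ) (h1 : θ < 1) (x y : SigmaA N A) :
    dTheta θ x y ≤ 1 / (1 - θ) := by
  simpa using dT_le_of_agree h0 h1 0 (x := x) (y := y) (by simp)

theorem lipD_continuous {θ : ℝ} (h0 : 0 < θ) (h1 : θ < 1) {f : SigmaA N A → ℝ}
    (hf : LipD (dTheta θ) f) : Continuous f := by
  obtain ⟨L, hL⟩ := hf
  rw [continuous_iff_continuousAt]
  intro x
  rw [Metric.continuousAt_iff']
  intro ε hε
  have ht : Filter.Tendsto (fun n : ℕ => |L| * (θ ^ n / (1 - θ))) Filter.atTop (nhds 0) := by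
    have := ((tendsto_pow_atTop_nhds_zero_of_lt_one h0.le h1).div_const (1 - θ)).const_mul |L|
    simpa using this
  obtain ⟨n, hn⟩ := (ht.eventually (gt_mem_nhds hε)).exists
  have ho : IsOpen {y : SigmaA N A | ∀ i ∈ Finset.range n, y.val i = x.val i} := by
    have : {y : SigmaA N A | ∀ i ∈ Finset.range n, y.val i = x.val i}
        = ⋂ i ∈ Finset.range n, (fun y : SigmaA N A => y.val i) ⁻¹' {x.val i} := by
      ext; simp
    rw [this]
    refine isOpen_biInter_finset fun i _ => (isOpen_discrete _).preimage ?_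
    exact (continuous_apply i).comp continuous_subtype_val
  filter_upwards [ho.mem_nhds (by simp)] with y hy
  rw [Real.dist_eq]
  refine lt_of_le_of_lt ((hL y x).trans ?_) hn
  have hd := dT_le_of_agree h0 h1 n (x := y) (y := x) (fun i hi => hy i (Finset.mem_range.2 hi))
  calc L * dTheta θ y x ≤ |L| * dTheta θ y x :=
        mul_le_mul_of_nonneg_right (le_abs_self L) (dT_nonneg h0 _ _)
    _ ≤ _ := mul_le_mul_of_nonneg_left hd (abs_nonneg L)

theorem lipD_measurable {θ : ℝ} (h0 : 0 < θ) (h1 : θ < 1) {f : SigmaA N A → ℝ}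
    (hf : LipD (dTheta θ) f) : Measurable f :=
  (lipD_continuous h0 h1 hf).measurable

theorem lipD_bdd {θ : ℝ} (h0 : 0 < θ) (h1 : θ < 1) {f : SigmaA N A → ℝ}
    (hf : LipD (dTheta θ) f) : ∃ C, 0 ≤ C ∧ ∀ x, |f x| ≤ C := by
  obtain ⟨L, hL⟩ := hf
  rcases isEmpty_or_nonempty (SigmaA N A) with he | ⟨⟨x0⟩⟩
  · exact ⟨0, le_rfl, fun x => (he.false x).elim⟩
  have hp : 0 < 1 - θ := by linarith
  refine ⟨|f x0| + |L| * (1 / (1 - θ)), by positivity, fun x => ?_⟩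
  have h2 := hL x x0
  have h3 : L * dTheta θ x x0 ≤ |L| * (1 / (1 - θ)) :=
    (mul_le_mul_of_nonneg_right (le_abs_self L) (dT_nonneg h0 _ _)).trans
      (mul_le_mul_of_nonneg_left (dT_le h0 h1 _ _) (abs_nonneg L))
  have h4 := abs_sub_abs_le_abs_sub (f x) (f x0)
  linarith

theorem lipD_integrable {θ : ℝ} (h0 : 0 < θ) (h1 : θ < 1) {f : SigmaA N A → ℝ}
    (hf : LipD (dTheta θ) f) (m : Measure (SigmaA N A)) [IsFiniteMeasure m] :
    Integrable f m := by
  obtain ⟨C, _, hC⟩ := lipD_bdd h0 h1 hf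
  exact Integrable.of_bound (lipD_measurable h0 h1 hf).aestronglyMeasurable C
    (Filter.Eventually.of_forall hC)

theorem thetaNorm_lt_top {θ : ℝ} (h0 : 0 < θ) (h1 : θ < 1) {f : SigmaA N A → ℝ}
    (hf : LipD (dTheta θ) f) : thetaNorm (dTheta θ) f < ⊤ := by
  obtain ⟨C, _, hC⟩ := lipD_bdd h0 h1 hf
  obtain ⟨L, hL⟩ := hf
  refine ENNReal.add_lt_top.2 ⟨?_, ?_⟩
  · exact lt_of_le_of_lt (iSup_le fun x => ENNReal.ofReal_le_ofReal (hC x)) ENNReal.ofReal_lt_top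
  · refine lt_of_le_of_lt (iSup_le fun x => iSup_le fun y => ?_) (ENNReal.ofReal_lt_top (r := |L|))
    refine ENNReal.ofReal_le_ofReal ?_
    rcases (dT_nonneg h0 x y).eq_or_lt with h | h
    · rw [← h]; simp
    · rw [div_le_iff₀ h]
      exact (hL x y).trans (mul_le_mul_of_nonneg_right (le_abs_self L) h.le)

theorem lipD_of_thetaNorm {θ : ℝ} (h0 : 0 < θ) (h1 : θ < 1) {f : SigmaA N A → ℝ}
    (hf : thetaNorm (dTheta θ) f < ⊤) : LipD (dTheta θ) f := by
  have hl : lipConst (dTheta θ) f ≠ ⊤ := (ENNReal.add_lt_top.1 hf).2.ne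
  refine ⟨(lipConst (dTheta θ) f).toReal, fun x y => ?_⟩
  by_cases h : x = y
  · subst h; simp [dT_self]
  · have hp := dT_pos h0 h1 h
    rw [← div_le_iff₀ hp]
    have : ENNReal.ofReal (|f x - f y| / dTheta θ x y) ≤ lipConst (dTheta θ) f :=
      le_iSup₂ (f := fun x y => ENNReal.ofReal (|f x - f y| / dTheta θ x y)) x y
    exact (ENNReal.ofReal_le_iff_le_toReal hl).1 this

theorem abs_le_thetaNorm {θ : ℝ} {f : SigmaA N A → ℝ}
    (hf : thetaNorm (dTheta θ) f ≠ ⊤) (x : SigmaA N A) :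
    |f x| ≤ (thetaNorm (dTheta θ) f).toReal := by
  refine (ENNReal.ofReal_le_iff_le_toReal hf).1 ?_
  refine le_trans ?_ (le_self_add (a := supNormE f))
  exact le_iSup (f := fun x => ENNReal.ofReal |f x|) x

theorem measurable_shift : Measurable (shift : SigmaA N A → SigmaA N A) := by
  refine Measurable.subtype_mk ?_
  refine measurable_pi_lambda _ fun i => ?_
  exact (measurable_pi_apply (i + 1)).comp measurable_subtype_coe

open Classical in
/-- total version of prepend -/
noncomputable def pre (i : Fin N) (x : SigmaA N A) : SigmaA N A :=
  if h : A i (x.val 0) = true then prepend i x h else x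

theorem pre_eq {i : Fin N} {x : SigmaA N A} (h : A i (x.val 0) = true) :
    pre i x = prepend i x h := by simp [pre, h]

theorem measurableSet_allowed (i : Fin N) :
    MeasurableSet {x : SigmaA N A | A i (x.val 0) = true} := by
  have : Measurable (fun x : SigmaA N A => x.val 0) :=
    (measurable_pi_apply 0).comp measurable_subtype_coe
  exact this (MeasurableSet.of_discrete (s := {j | A i j = true}))

theorem measurableSet_cyl (i : Fin N) :
    MeasurableSet {x : SigmaA N A | x.val 0 = i} := by
  have : Measurable (fun x : SigmaA N A => x.val 0) :=
    (measurable_pi_apply 0).comp measurable_subtype_coe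
  exact this (MeasurableSet.of_discrete (s := {j | j = i}))

theorem measurable_pre (i : Fin N) : Measurable (pre i : SigmaA N A → SigmaA N A) := by
  unfold pre
  refine Measurable.dite (s := {x : SigmaA N A | A i (x.val 0) = true})
    (f := fun x => prepend i x.1 x.2) (g := fun x => x.1) ?_ ?_ (measurableSet_allowed i)
  · refine Measurable.subtype_mk ?_
    refine measurable_pi_lambda _ fun n => ?_
    cases n with
    | zero => exact measurable_const
    | succ k =>
      exact ((measurable_pi_apply k).comp measurable_subtype_coe).comp measurable_subtype_coe
  · exact measurable_subtype_coe

theorem shift_pre {i : Fin N} {x : SigmaA N A} (h : A i (x.val 0) = true) :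
    shift (pre i x) = x := by
  rw [pre_eq h]; rfl

theorem pre_zero {i : Fin N} {x : SigmaA N A} (h : A i (x.val 0) = true) :
    (pre i x).val 0 = i := by
  rw [pre_eq h]; rfl

theorem pre_shift (x : SigmaA N A) : pre (x.val 0) (shift x) = x := by
  rw [pre_eq (x.prop 0)]
  refine Subtype.ext (funext fun n => ?_)
  cases n <;> rfl

open Classical in
/-- weights of the transfer operator -/
noncomputable def wt (Jm : Fin N → SigmaA N A → ℝ) (i : Fin N) (x : SigmaA N A) : ℝ :=
  if A i (x.val 0) = true then max ((Jm i (pre i x))⁻¹) 0 else 0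

theorem measurable_wt {Jm : Fin N → SigmaA N A → ℝ}
    (hm : ∀ i, Measurable fun x => (Jm i x)⁻¹) (i : Fin N) : Measurable (wt Jm i) := by
  unfold wt
  refine Measurable.ite (measurableSet_allowed i) ?_ measurable_const
  exact ((hm i).comp (measurable_pre i)).max measurable_const

theorem wt_nonneg (Jm : Fin N → SigmaA N A → ℝ) (i : Fin N) (x : SigmaA N A) :
    0 ≤ wt Jm i x := by
  unfold wt; split_ifs <;> simp

theorem set_eq (i : Fin N) (E : Set (SigmaA N A)) :
    {γ : SigmaA N A | ∃ h : A i (γ.val 0) = true, prepend i γ h ∈ E}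
      = pre i ⁻¹' E ∩ {x | A i (x.val 0) = true} := by
  ext γ
  constructor
  · rintro ⟨h, hE⟩
    exact ⟨by simpa [pre_eq h] using hE, h⟩
  · rintro ⟨hE, h⟩
    exact ⟨h, by simpa [pre_eq h] using hE⟩

theorem null_pre {m : Measure (SigmaA N A)} {Jm : Fin N → SigmaA N A → ℝ}
    (hJ : IsJacobian m Jm) {p : SigmaA N A → Prop} (hp : ∀ᵐ x ∂m, p x) :
    ∀ᵐ x ∂m, ∀ i, A i (x.val 0) = true → p (pre i x) := by
  rw [MeasureTheory.ae_all_iff]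
  intro i
  have h := hJ i (toMeasurable m {x | ¬ p x}) (measurableSet_toMeasurable _ _)
  have hz : m (toMeasurable m {x | ¬ p x}) = 0 := by
    rw [measure_toMeasurable]; exact hp
  rw [setLIntegral_measure_zero _ _ (measure_mono_null inter_subset_left hz), set_eq] at h
  refine measure_mono_null ?_ h
  intro x hx
  simp only [mem_compl_iff, mem_ofPred_eq, Classical.not_imp] at hx
  exact ⟨subset_toMeasurable _ _ hx.2, hx.1⟩

theorem cov_one {m : Measure (SigmaA N A)} (hminv : m.map shift = m)
    {Jm : Fin N → SigmaA N A → ℝ} (hJ : IsJacobian m Jm)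
    (hm : ∀ i, Measurable fun x => (Jm i x)⁻¹) (i : Fin N)
    {f : SigmaA N A → ℝ≥0∞} (hf : Measurable f) :
    ∫⁻ x in {x | x.val 0 = i}, f x ∂m = ∫⁻ x, ENNReal.ofReal (wt Jm i x) * f (pre i x) ∂m := by
  have hJm : Measurable (Jm i) := by
    have := (hm i).inv
    simpa [Pi.inv_def] using this
  have hS := measurableSet_allowed (A := A) i
  have hC := measurableSet_cyl (A := A) i
  have h1 : (m.restrict {x | A i (x.val 0) = true}).map (pre i)
      = (m.restrict {x | x.val 0 = i}).withDensity (fun x => ENNReal.ofReal (Jm i x)) := by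
    ext E hE
    rw [Measure.map_apply (measurable_pre i) hE, Measure.restrict_apply (measurable_pre i hE),
      ← set_eq, hJ i E hE, withDensity_apply _ hE, Measure.restrict_restrict hE]
  have h2 : ∀ᵐ x ∂(m.restrict {x | x.val 0 = i}), 0 < Jm i x := by
    rw [ae_restrict_iff' hC]
    set E : Set (SigmaA N A) := {x | Jm i x ≤ 0} ∩ {x | x.val 0 = i} with hEdef
    have hE : MeasurableSet E := (hJm measurableSet_Iic).inter hC
    have h3 := hJ i E hE
    have h4 : ∫⁻ x in E ∩ {x : SigmaA N A | x.val 0 = i}, ENNReal.ofReal (Jm i x) ∂m = 0 := by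
      rw [setLIntegral_congr_fun (g := fun _ => 0) (hE.inter hC)]
      · simp
      · intro x hx
        exact ENNReal.ofReal_of_nonpos hx.1.1
    rw [h4, set_eq] at h3
    have h5 : m (shift ⁻¹' (pre i ⁻¹' E ∩ {x | A i (x.val 0) = true})) = 0 := by
      rw [← Measure.map_apply measurable_shift ((measurable_pre i hE).inter hS), hminv, h3]
    refine measure_mono_null ?_ h5
    intro x hx
    simp only [mem_compl_iff, mem_ofPred_eq, Classical.not_imp, not_lt] at hx
    obtain ⟨hx0, hx1⟩ := hx
    refine ⟨?_, ?_⟩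
    · show pre i (shift x) ∈ E
      rw [← hx0, pre_shift]
      exact ⟨hx1, hx0⟩
    · rw [← hx0]; exact x.prop 0
  have h3 : ∫⁻ x in {x | x.val 0 = i}, f x ∂m
      = ∫⁻ x in {x | x.val 0 = i}, ENNReal.ofReal (Jm i x) *
          (ENNReal.ofReal (Jm i x)⁻¹ * f x) ∂m := by
    refine lintegral_congr_ae ?_
    filter_upwards [h2] with x hx
    rw [← mul_assoc, ← ENNReal.ofReal_mul hx.le, mul_inv_cancel₀ hx.ne']
    simp
  have hg : Measurable fun x => ENNReal.ofReal (Jm i x)⁻¹ * f x := (hm i).ennreal_ofReal.mul hf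
  have h4 := lintegral_withDensity_eq_lintegral_mul (m.restrict {x | x.val 0 = i})
    hJm.ennreal_ofReal hg
  rw [h3]
  simp only [Pi.mul_apply] at h4
  rw [← h4, ← h1, lintegral_map hg (measurable_pre i), ← lintegral_indicator hS]
  refine lintegral_congr fun x => ?_
  by_cases hx : A i (x.val 0) = true
  · rw [indicator_of_mem (by exact hx)]
    simp only [wt, hx, if_true]
    congr 1
    rcases le_total 0 ((Jm i (pre i x))⁻¹) with h | h
    · rw [max_eq_left h]
    · rw [max_eq_right h, ENNReal.ofReal_of_nonpos h]; simp
  · rw [indicator_of_notMem (by exact hx)]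
    simp [wt, hx]

theorem cov {m : Measure (SigmaA N A)} (hminv : m.map shift = m)
    {Jm : Fin N → SigmaA N A → ℝ} (hJ : IsJacobian m Jm)
    (hm : ∀ i, Measurable fun x => (Jm i x)⁻¹)
    {f : SigmaA N A → ℝ≥0∞} (hf : Measurable f) :
    ∫⁻ x, f x ∂m = ∫⁻ x, ∑ i, ENNReal.ofReal (wt Jm i x) * f (pre i x) ∂m := by
  rw [lintegral_finsetSum]
  swap
  · intro i _
    exact (measurable_wt hm i).ennreal_ofReal.mul (hf.comp (measurable_pre i))
  simp_rw [← cov_one hminv hJ hm _ hf, ← lintegral_indicator (measurableSet_cyl _)]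
  rw [← lintegral_finsetSum]
  swap
  · intro i _
    exact hf.indicator (measurableSet_cyl i)
  refine lintegral_congr fun x => ?_
  rw [Finset.sum_eq_single (x.val 0)]
  · simp
  · intro b _ hb
    exact indicator_of_notMem (by simpa using hb.symm) _
  · simp

theorem sum_wt {m : Measure (SigmaA N A)} [IsProbabilityMeasure m] (hminv : m.map shift = m)
    {Jm : Fin N → SigmaA N A → ℝ} (hJ : IsJacobian m Jm)
    (hm : ∀ i, Measurable fun x => (Jm i x)⁻¹) :
    ∀ᵐ x ∂m, ∑ i, wt Jm i x = 1 := by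
  have hmeas : Measurable fun x => ∑ i, ENNReal.ofReal (wt Jm i x) :=
    Finset.measurable_sum _ fun i _ => (measurable_wt hm i).ennreal_ofReal
  have h : (fun x => ∑ i, ENNReal.ofReal (wt Jm i x)) =ᵐ[m] fun _ => 1 := by
    refine ae_eq_of_forall_setLIntegral_eq_of_sigmaFinite hmeas measurable_const ?_
    intro E hE _
    have h1 : ∫⁻ x in E, (1 : ℝ≥0∞) ∂m = ∫⁻ x, (shift ⁻¹' E).indicator 1 x ∂m := by
      rw [lintegral_indicator_one (measurable_shift hE), setLIntegral_one,
        ← Measure.map_apply measurable_shift hE, hminv]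
    rw [h1, cov hminv hJ hm (measurable_one.indicator (measurable_shift hE)),
      ← lintegral_indicator hE]
    refine lintegral_congr fun x => ?_
    have : ∀ i, ENNReal.ofReal (wt Jm i x) * (shift ⁻¹' E).indicator 1 (pre i x)
        = ENNReal.ofReal (wt Jm i x) * E.indicator 1 x := by
      intro i
      by_cases hx : A i (x.val 0) = true
      · congr 1
        by_cases hxE : x ∈ E <;> simp [indicator, mem_preimage, shift_pre hx, hxE]
      · simp [wt, hx]
    simp_rw [this]
    by_cases hxE : x ∈ E <;> simp [hxE]
  filter_upwards [h] with x hx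
  rw [← ENNReal.ofReal_sum_of_nonneg (fun i _ => wt_nonneg Jm i x)] at hx
  exact ENNReal.ofReal_eq_one.1 hx

theorem lip_wt {θ : ℝ} (h0 : 0 < θ) (h1 : θ < 1) {Jm : Fin N → SigmaA N A → ℝ} {gLip : ℝ}
    (hgLip : ∀ i : Fin N, LipWithD (dTheta θ) gLip fun x => (Jm i x)⁻¹)
    {x y : SigmaA N A} (hxy : x.val 0 = y.val 0) (i : Fin N) :
    |wt Jm i x - wt Jm i y| ≤ gLip * (θ * dTheta θ x y) := by
  by_cases hx : A i (x.val 0) = true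
  · have hy : A i (y.val 0) = true := hxy ▸ hx
    simp only [wt, hx, hy, if_true]
    refine (abs_max_sub_max_le_abs _ _ _).trans ?_
    have := hgLip i (pre i x) (pre i y)
    rw [pre_eq hx, pre_eq hy, dT_prepend h0 h1] at this
    rw [pre_eq hx, pre_eq hy]
    exact this
  · have hy : ¬ A i (y.val 0) = true := hxy ▸ hx
    simp only [wt, hx, hy]
    have := (abs_nonneg _).trans (hgLip i x y)
    have := mul_nonneg h0.le this
    simp
    linarith

theorem fst_eq {θ : ℝ} (h0 : 0 < θ) (h1 : θ < 1)
    {m : Measure (SigmaA N A)} [IsProbabilityMeasure m] (hminv : m.map shift = m)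
    {Pσ : (SigmaA N A → ℝ) → SigmaA N A → ℝ} (hPF : IsPerronFrobenius m Pσ)
    {D r : ℝ} (hr0 : 0 < r) (hr1 : r < 1) (hgap : HasGap m θ Pσ D r)
    {ν : Measure (SigmaA N A)} [IsProbabilityMeasure ν] (hνinv : ν.map shift = ν)
    (hac : ν ≪ m) {ψ : SigmaA N A → ℝ} (hψ : ψ =ᵐ[m] fun x => (ν.rnDeriv m x).toReal)
    (hψL : LipD (dTheta θ) ψ) : ν = m := by
  set φ : SigmaA N A → ℝ := fun x => ψ x - 1 with hφdef
  have hφL : LipD (dTheta θ) φ := by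
    obtain ⟨L, hL⟩ := hψL
    refine ⟨L, fun x y => ?_⟩
    simpa [hφdef] using hL x y
  have hset : ∀ E, MeasurableSet E → ∫ x, φ x * E.indicator 1 x ∂m = ν.real E - m.real E := by
    intro E hE
    have e1 : (fun x => φ x * E.indicator 1 x) = E.indicator φ := by
      ext x; by_cases hx : x ∈ E <;> simp [hx]
    rw [e1, integral_indicator hE]
    have hψi : Integrable ψ m := lipD_integrable h0 h1 hψL m
    rw [hφdef, integral_sub hψi.integrableOn (integrable_const _).integrableOn]
    rw [integral_congr_ae (ae_restrict_of_ae hψ), Measure.setIntegral_toReal_rnDeriv hac]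
    simp
  have hφ0 : ∫ x, φ x ∂m = 0 := by
    have := hset univ MeasurableSet.univ
    simpa using this
  have hgap' := hgap φ hφL hφ0
  have hfin : ∀ n, thetaNorm (dTheta θ) (Pσ^[n] φ) < ⊤ := fun n =>
    lt_of_le_of_lt (hgap' n) (ENNReal.mul_lt_top ENNReal.ofReal_lt_top (thetaNorm_lt_top h0 h1 hφL))
  have hLip : ∀ n, LipD (dTheta θ) (Pσ^[n] φ) := fun n => lipD_of_thetaNorm h0 h1 (hfin n)
  have hdual : ∀ n, ∀ E, MeasurableSet E →
      ∫ x, (Pσ^[n] φ) x * E.indicator 1 x ∂m = ν.real E - m.real E := by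
    intro n
    induction n with
    | zero => exact hset
    | succ n ih =>
      intro E hE
      rw [Function.iterate_succ_apply']
      have hb : ∃ C, ∀ x : SigmaA N A, |E.indicator (1 : SigmaA N A → ℝ) x| ≤ C :=
        ⟨1, fun x => by by_cases hx : x ∈ E <;> simp [hx]⟩
      rw [hPF (Pσ^[n] φ) (E.indicator 1) (lipD_integrable h0 h1 (hLip n) m)
        (measurable_one.indicator hE) hb]
      have e : ∀ x, E.indicator (1 : SigmaA N A → ℝ) (shift x)
          = (shift ⁻¹' E).indicator (1 : SigmaA N A → ℝ) x := fun x => by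
        by_cases hx : shift x ∈ E <;> simp [indicator, hx]
      simp_rw [e]
      rw [ih _ (measurable_shift hE), ← map_measureReal_apply measurable_shift hE,
        ← map_measureReal_apply measurable_shift hE, hminv, hνinv]
  have hbound : ∀ E, MeasurableSet E → ∀ n,
      |ν.real E - m.real E| ≤ |D * r ^ n| * (thetaNorm (dTheta θ) φ).toReal := by
    intro E hE n
    rw [← hdual n E hE, ← Real.norm_eq_abs]
    have hC : ∀ x, ‖(Pσ^[n] φ) x * E.indicator 1 x‖ ≤
        |D * r ^ n| * (thetaNorm (dTheta θ) φ).toReal := by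
      intro x
      have k1 := abs_le_thetaNorm (hfin n).ne x
      have k2 := ENNReal.toReal_mono (ENNReal.mul_lt_top ENNReal.ofReal_lt_top
        (thetaNorm_lt_top h0 h1 hφL)).ne (hgap' n)
      rw [ENNReal.toReal_mul] at k2
      have k3 : (ENNReal.ofReal (D * r ^ n)).toReal ≤ |D * r ^ n| := by
        rw [ENNReal.toReal_ofReal']
        exact max_le (le_abs_self _) (abs_nonneg _)
      have k4 := mul_le_mul_of_nonneg_right k3
        (ENNReal.toReal_nonneg (a := thetaNorm (dTheta θ) φ))
      have k5 := (k1.trans k2).trans k4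
      by_cases hx : x ∈ E
      · simpa [hx] using k5
      · simpa [hx] using (abs_nonneg _).trans k5
    have := norm_integral_le_of_norm_le_const (μ := m) (Filter.Eventually.of_forall hC)
    simpa using this
  ext E hE
  have hz : |ν.real E - m.real E| ≤ 0 := by
    refine ge_of_tendsto' (x := Filter.atTop (α := ℕ)) ?_ (hbound E hE)
    have := (((tendsto_pow_atTop_nhds_zero_of_lt_one hr0.le hr1).const_mul D).abs).mul_const
      (thetaNorm (dTheta θ) φ).toReal
    simpa using this
  have hz' : ν.real E = m.real E := by
    have := abs_nonpos_iff.1 hz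
    linarith
  exact (measureReal_eq_measureReal_iff).1 hz'

open ProbabilityTheory in
theorem fiber_formula
    {m : Measure (SigmaA N A)} [IsProbabilityMeasure m] (hminv : m.map shift = m)
    {G : SigmaA N A × K → K} (hGm : Measurable (skew G))
    {Jm : Fin N → SigmaA N A → ℝ} (hJ : IsJacobian m Jm)
    (hm : ∀ i, Measurable fun x => (Jm i x)⁻¹)
    (hb : ∀ i, ∃ C, 0 ≤ C ∧ ∀ x, |(Jm i x)⁻¹| ≤ C)
    {μ : Measure (SigmaA N A × K)} [IsProbabilityMeasure μ]
    (hinv : μ.map (skew G) = μ) (hfst : μ.fst = m) :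
    ∀ᵐ x ∂m, μ.condKernel x = ∑ i, ENNReal.ofReal (wt Jm i x) •
      (μ.condKernel (pre i x)).map (fun z => G (pre i x, z)) := by
  have hG : Measurable G := measurable_snd.comp hGm
  have hGx : ∀ x, Measurable fun z => G (x, z) := fun x => hG.comp measurable_prodMk_left
  have hmk : ∀ E : Set K, MeasurableSet E →
      Measurable fun x => μ.condKernel x {z | G (x, z) ∈ E} := fun E hE =>
    Kernel.measurable_kernel_prodMk_left (κ := μ.condKernel) (hG hE)
  let κ' : Kernel (SigmaA N A) K :=
    { toFun := fun x => ∑ i, ENNReal.ofReal (wt Jm i x) •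
        (μ.condKernel (pre i x)).map (fun z => G (pre i x, z))
      measurable' := by
        refine Measure.measurable_of_measurable_coe _ fun E hE => ?_
        have : ∀ x, (∑ i, ENNReal.ofReal (wt Jm i x) •
            (μ.condKernel (pre i x)).map (fun z => G (pre i x, z))) E
            = ∑ i, ENNReal.ofReal (wt Jm i x) * μ.condKernel (pre i x) {z | G (pre i x, z) ∈ E} := by
          intro x
          rw [Measure.finsetSum_apply]
          refine Finset.sum_congr rfl fun i _ => ?_
          rw [Measure.smul_apply, Measure.map_apply (hGx _) hE]
          rfl
        simp_rw [this]
        refine Finset.measurable_sum _ fun i _ => ?_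
        exact (measurable_wt hm i).ennreal_ofReal.mul ((hmk E hE).comp (measurable_pre i)) }
  have hκ' : ∀ x E, MeasurableSet E → κ' x E = ∑ i, ENNReal.ofReal (wt Jm i x) *
      μ.condKernel (pre i x) {z | G (pre i x, z) ∈ E} := by
    intro x E hE
    show (∑ i, ENNReal.ofReal (wt Jm i x) •
            (μ.condKernel (pre i x)).map (fun z => G (pre i x, z))) E = _
    rw [Measure.finsetSum_apply]
    refine Finset.sum_congr rfl fun i _ => ?_
    rw [Measure.smul_apply, Measure.map_apply (hGx _) hE]
    rfl
  choose C hC0 hC using hb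
  haveI : IsFiniteKernel κ' := by
    refine ⟨⟨∑ i, ENNReal.ofReal (C i), ?_, fun x => ?_⟩⟩
    · exact ENNReal.sum_lt_top.2 fun i _ => ENNReal.ofReal_lt_top
    · rw [hκ' x univ MeasurableSet.univ]
      refine Finset.sum_le_sum fun i _ => ?_
      refine (mul_le_of_le_one_right' prob_le_one).trans (ENNReal.ofReal_le_ofReal ?_)
      unfold wt
      split_ifs
      · exact max_le ((le_abs_self _).trans (hC i _)) (hC0 i)
      · exact hC0 i
  have hd : m ⊗ₘ μ.condKernel = μ := by
    have := μ.disintegrate μ.condKernel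
    rwa [hfst] at this
  have key : μ = μ.fst ⊗ₘ κ' := by
    rw [hfst]
    ext E hE
    rw [Measure.compProd_apply hE]
    have hE' : MeasurableSet (skew G ⁻¹' E) := hGm hE
    have hf : Measurable fun x => μ.condKernel x (Prod.mk x ⁻¹' (skew G ⁻¹' E)) :=
      Kernel.measurable_kernel_prodMk_left (κ := μ.condKernel) hE'
    conv_lhs => rw [← hinv, Measure.map_apply hGm hE, ← hd, Measure.compProd_apply hE',
      cov hminv hJ hm hf]
    refine lintegral_congr fun x => ?_
    rw [hκ' x _ (measurable_prodMk_left hE)]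
    refine Finset.sum_congr rfl fun i _ => ?_
    by_cases hx : A i (x.val 0) = true
    · congr 2
      ext z
      simp [skew, shift_pre hx]
    · simp [wt, hx]
  have := eq_condKernel_of_measure_eq_compProd κ' key
  rw [hfst] at this
  filter_upwards [this] with x hx
  exact hx.symm

/-- recursively good points -/
def goodSet (Q : SigmaA N A → Prop) : ℕ → SigmaA N A → Prop
  | 0 => fun _ => True
  | n + 1 => fun x => Q x ∧ ∀ i, A i (x.val 0) = true → goodSet Q n (pre i x)

theorem ae_goodSet {m : Measure (SigmaA N A)} {Jm : Fin N → SigmaA N A → ℝ}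
    (hJ : IsJacobian m Jm) {Q : SigmaA N A → Prop} (hQ : ∀ᵐ x ∂m, Q x) (n : ℕ) :
    ∀ᵐ x ∂m, goodSet Q n x := by
  induction n with
  | zero => exact Filter.Eventually.of_forall fun _ => trivial
  | succ n ih =>
    filter_upwards [hQ, null_pre hJ ih] with x h1 h2
    exact ⟨h1, h2⟩

theorem lip_integrable {L : ℝ} {g : K → ℝ} (hg : ∀ z w, |g z - g w| ≤ L * dist z w)
    (ν : Measure K) [IsFiniteMeasure ν] : Integrable g ν := by
  have hc : Continuous g := by
    have : LipschitzWith (Real.toNNReal L) g := by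
      refine LipschitzWith.of_dist_le_mul fun z w => ?_
      rw [Real.dist_eq]
      refine (hg z w).trans (mul_le_mul_of_nonneg_right (Real.le_coe_toNNReal L) dist_nonneg)
    exact this.continuous
  exact hc.integrable_of_hasCompactSupport (HasCompactSupport.of_compactSpace g)

theorem dist_le_one (hdiam : Metric.diam (Set.univ : Set K) = 1) (z w : K) : dist z w ≤ 1 := by
  rw [← hdiam]
  exact Metric.dist_le_diam_of_mem isCompact_univ.isBounded (mem_univ _) (mem_univ _)

theorem abs_integral_le_of_bdd {g : K → ℝ} {L : ℝ} (h : ∀ z, |g z| ≤ L)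
    (ν : Measure K) [IsProbabilityMeasure ν] : |∫ z, g z ∂ν| ≤ L := by
  have := norm_integral_le_of_norm_le_const (μ := ν) (f := g) (C := L)
    (Filter.Eventually.of_forall h)
  simpa using this

open ProbabilityTheory in
theorem main_est {θ : ℝ} (h0 : 0 < θ) (h1 : θ < 1)
    (hdiam : Metric.diam (Set.univ : Set K) = 1)
    {G : SigmaA N A × K → K} (hG : Measurable G)
    {α : ℝ} (hα0 : 0 < α) (hα1 : α < 1) (hG1 : CondG1 G α)
    {H : ℝ} (hG2 : CondG2 θ G H)
    {Jm : Fin N → SigmaA N A → ℝ} {gLip : ℝ}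
    (hgLip : ∀ i : Fin N, LipWithD (dTheta θ) gLip fun x => (Jm i x)⁻¹)
    (T : Kernel (SigmaA N A) K) [IsMarkovKernel T] {C : ℝ} (hC2 : 2 ≤ C)
    (hC1 : H * θ + θ * (N : ℝ) * gLip ≤ C) (n : ℕ) :
    ∀ x y : SigmaA N A,
      goodSet (fun x => ∑ i, wt Jm i x = 1 ∧ T x = ∑ i, ENNReal.ofReal (wt Jm i x) •
        (T (pre i x)).map (fun z => G (pre i x, z))) n x →
      goodSet (fun x => ∑ i, wt Jm i x = 1 ∧ T x = ∑ i, ENNReal.ofReal (wt Jm i x) •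
        (T (pre i x)).map (fun z => G (pre i x, z))) n y →
      ∀ (L : ℝ), 0 ≤ L → ∀ g : K → ℝ, (∀ z w, |g z - g w| ≤ L * dist z w) →
      |∫ z, g z ∂(T x) - ∫ z, g z ∂(T y)| ≤ L * (C / (1 - θ) * dTheta θ x y + 2 * α ^ n) := by
  have hθ : 0 < 1 - θ := by linarith
  have hB : 0 ≤ C / (1 - θ) := by positivity
  -- reduction to bounded observables
  have hcenter : ∀ x y : SigmaA N A, ∀ R : ℝ, ∀ L : ℝ, 0 ≤ L →
      (∀ g : K → ℝ, (∀ z w, |g z - g w| ≤ L * dist z w) → (∀ z, |g z| ≤ L) →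
        |∫ z, g z ∂(T x) - ∫ z, g z ∂(T y)| ≤ R) →
      ∀ g : K → ℝ, (∀ z w, |g z - g w| ≤ L * dist z w) →
        |∫ z, g z ∂(T x) - ∫ z, g z ∂(T y)| ≤ R := by
    intro x y R L hL h g hg
    obtain ⟨z0⟩ := ‹Nonempty K›
    have := h (fun z => g z - g z0) (fun z w => by simpa using hg z w) (fun z =>
      (hg z z0).trans (mul_le_of_le_one_right hL (dist_le_one hdiam z z0)))
    rw [integral_sub (lip_integrable hg _) (integrable_const _),
      integral_sub (lip_integrable hg _) (integrable_const _)] at this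
    simpa using this
  induction n with
  | zero =>
    intro x y _ _ L hL
    refine hcenter x y _ L hL fun g hg hgb => ?_
    have a1 := abs_integral_le_of_bdd hgb (T x)
    have a2 := abs_integral_le_of_bdd hgb (T y)
    have a3 := abs_sub (∫ z, g z ∂(T x)) (∫ z, g z ∂(T y))
    have a4 : 0 ≤ L * (C / (1 - θ) * dTheta θ x y) :=
      mul_nonneg hL (mul_nonneg hB (dT_nonneg h0 _ _))
    rw [pow_zero]
    linarith
  | succ n ih =>
    intro x y hx hy L hL
    refine hcenter x y _ L hL fun g hg hgb => ?_
    have hdn := dT_nonneg h0 x y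
    have hCd : C * dTheta θ x y ≤ C / (1 - θ) * dTheta θ x y := by
      refine mul_le_mul_of_nonneg_right ?_ hdn
      rw [le_div_iff₀ hθ]
      nlinarith
    by_cases hxy : x.val 0 = y.val 0
    swap
    · have a1 := abs_integral_le_of_bdd hgb (T x)
      have a2 := abs_integral_le_of_bdd hgb (T y)
      have a3 := abs_sub (∫ z, g z ∂(T x)) (∫ z, g z ∂(T y))
      have a4 := dT_one_le h0 h1 hxy
      have a5 : 2 ≤ C / (1 - θ) * dTheta θ x y + 2 * α ^ (n + 1) := by
        have : 0 ≤ α ^ (n + 1) := by positivity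
        nlinarith
      have := mul_le_mul_of_nonneg_left a5 hL
      linarith
    obtain ⟨⟨hsx, hTx⟩, hgx⟩ := hx
    obtain ⟨⟨hsy, hTy⟩, hgy⟩ := hy
    have hGx : ∀ u, Measurable fun z => G (u, z) := fun u => hG.comp measurable_prodMk_left
    have hgm : Continuous g := by
      have : LipschitzWith (Real.toNNReal L) g := by
        refine LipschitzWith.of_dist_le_mul fun z w => ?_
        rw [Real.dist_eq]
        exact (hg z w).trans
          (mul_le_mul_of_nonneg_right (Real.le_coe_toNNReal L) dist_nonneg)
      exact this.continuous
    have hint : ∀ u, (T u = ∑ i, ENNReal.ofReal (wt Jm i u) •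
        (T (pre i u)).map (fun z => G (pre i u, z))) →
        ∫ z, g z ∂(T u) = ∑ i, wt Jm i u * ∫ z, g (G (pre i u, z)) ∂(T (pre i u)) := by
      intro u hu
      rw [hu, integral_finsetSum_measure]
      · refine Finset.sum_congr rfl fun i _ => ?_
        rw [integral_smul_measure, ENNReal.toReal_ofReal (wt_nonneg _ _ _),
          integral_map (hGx _).aemeasurable hgm.aestronglyMeasurable, smul_eq_mul]
      · intro i _
        haveI : IsProbabilityMeasure ((T (pre i u)).map (fun z => G (pre i u, z))) :=
          Measure.isProbabilityMeasure_map (hGx _).aemeasurable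
        exact (lip_integrable hg _).smul_measure ENNReal.ofReal_ne_top
    rw [hint x hTx, hint y hTy, ← Finset.sum_sub_distrib]
    set d := dTheta θ x y with hd
    have hgd : ∀ i : Fin N, 0 ≤ gLip * d := fun i => (abs_nonneg _).trans (hgLip i x y)
    -- the estimate of each term
    have hterm : ∀ i, |wt Jm i x * ∫ z, g (G (pre i x, z)) ∂(T (pre i x)) -
        wt Jm i y * ∫ z, g (G (pre i y, z)) ∂(T (pre i y))| ≤
        gLip * (θ * d) * L + wt Jm i y * (L * (H * (θ * d)) +
          L * α * (C / (1 - θ) * (θ * d) + 2 * α ^ n)) := by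
      intro i
      by_cases hAx : A i (x.val 0) = true
      swap
      · have hAy : ¬ A i (y.val 0) = true := hxy ▸ hAx
        have e1 : wt Jm i x = 0 := by simp [wt, hAx]
        have e2 : wt Jm i y = 0 := by simp [wt, hAy]
        rw [e1, e2]
        have := mul_nonneg (mul_nonneg h0.le (hgd i)) hL
        simp only [zero_mul, sub_zero, abs_zero, add_zero]
        linarith
      have hAy : A i (y.val 0) = true := hxy ▸ hAx
      have hdp : dTheta θ (pre i x) (pre i y) = θ * d := by
        rw [pre_eq hAx, pre_eq hAy, dT_prepend h0 h1]
      set X := pre i x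
      set Y := pre i y
      have hlipG : ∀ u, ∀ z w, |g (G (u, z)) - g (G (u, w))| ≤ L * α * dist z w := by
        intro u z w
        refine (hg _ _).trans ?_
        rw [mul_assoc]
        exact mul_le_mul_of_nonneg_left (hG1 u z w) hL
      have b1 : |∫ z, g (G (X, z)) ∂(T X)| ≤ L := abs_integral_le_of_bdd (fun z => hgb _) _
      have b2 : |∫ z, g (G (X, z)) ∂(T X) - ∫ z, g (G (X, z)) ∂(T Y)| ≤
          L * α * (C / (1 - θ) * (θ * d) + 2 * α ^ n) := by
        have := ih X Y (hgx i hAx) (hgy i hAy) (L * α) (by positivity) (fun z => g (G (X, z)))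
          (hlipG X)
        rwa [hdp] at this
      have b3 : |∫ z, g (G (X, z)) ∂(T Y) - ∫ z, g (G (Y, z)) ∂(T Y)| ≤ L * (H * (θ * d)) := by
        rw [← integral_sub (lip_integrable (hlipG X) _) (lip_integrable (hlipG Y) _)]
        refine abs_integral_le_of_bdd (fun z => ?_) _
        refine (hg _ _).trans (mul_le_mul_of_nonneg_left ?_ hL)
        rw [← hdp]
        exact hG2 z X Y
      have b4 := lip_wt h0 h1 hgLip hxy i
      set a := ∫ z, g (G (X, z)) ∂(T X)
      set b := ∫ z, g (G (X, z)) ∂(T Y)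
      set c := ∫ z, g (G (Y, z)) ∂(T Y)
      have e : wt Jm i x * a - wt Jm i y * c
          = (wt Jm i x - wt Jm i y) * a + wt Jm i y * ((b - c) + (a - b)) := by ring
      rw [e]
      refine (abs_add_le _ _).trans (add_le_add ?_ ?_)
      · rw [abs_mul]
        exact mul_le_mul b4 b1 (abs_nonneg _) ((abs_nonneg _).trans b4)
      · rw [abs_mul, abs_of_nonneg (wt_nonneg Jm i y)]
        refine mul_le_mul_of_nonneg_left ?_ (wt_nonneg Jm i y)
        exact (abs_add_le _ _).trans (add_le_add b3 b2)
    refine (Finset.abs_sum_le_sum_abs _ _).trans ((Finset.sum_le_sum fun i _ => hterm i).trans ?_)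
    rw [Finset.sum_add_distrib, ← Finset.sum_mul (f := fun i => wt Jm i y), hsy, one_mul]
    simp only [Finset.sum_const, Finset.card_univ, Fintype.card_fin, nsmul_eq_mul]
    have c1 : (H * θ + θ * (N : ℝ) * gLip) * d ≤ C * d := mul_le_mul_of_nonneg_right hC1 hdn
    have c2 : C / (1 - θ) * d = C * d + θ * (C / (1 - θ) * d) := by
      field_simp; ring
    have c3 : α * (C / (1 - θ) * (θ * d)) ≤ θ * (C / (1 - θ) * d) := by
      have : 0 ≤ C / (1 - θ) * (θ * d) := by positivity
      nlinarith
    have c4 : (N : ℝ) * (gLip * (θ * d)) + H * (θ * d) + α * (C / (1 - θ) * (θ * d) + 2 * α ^ n)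
        ≤ C / (1 - θ) * d + 2 * α ^ (n + 1) := by
      rw [pow_succ]
      nlinarith
    have := mul_le_mul_of_nonneg_left c4 hL
    refine le_trans (le_of_eq ?_) this
    ring

/-- **Lipschitz regularity of the disintegration of `μ₀`.**
Under (G1), (G2) and the spectral gap of `P_σ`, the unique `F`-invariant
probability `μ₀ ∈ S^∞` belongs to `L_θ^+` and `|μ₀|_θ ≤ C₁/(1-θ)` with
`C₁ = max {Hθ + θN|g|_θ, 2}`. -/
theorem invariant_measure_lipschitz_disintegration
    (N : ℕ) (A : Fin N → Fin N → Bool) (hA : Aperiodic A)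
    (θ : ℝ) (hθ0 : 0 < θ) (hθ1 : θ < 1)
    (m : Measure (SigmaA N A)) [IsProbabilityMeasure m]
    (hmM : IsMarkov m) (hminv : m.map shift = m)
    {K : Type*} [MetricSpace K] [CompactSpace K] [Nonempty K]
    [MeasurableSpace K] [BorelSpace K]
    (hdiam : Metric.diam (Set.univ : Set K) = 1)
    (G : SigmaA N A × K → K) (hGm : Measurable (skew G))
    (α : ℝ) (hα0 : 0 < α) (hα1 : α < 1) (hG1 : CondG1 G α)
    (H : ℝ) (hG2 : CondG2 θ G H)
    (Pσ : (SigmaA N A → ℝ) → SigmaA N A → ℝ) (hPF : IsPerronFrobenius m Pσ)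
    (D r : ℝ) (hD : 0 < D) (hr0 : 0 < r) (hr1 : r < 1)
    (hgap : HasGap m θ Pσ D r)
    (Jm : Fin N → SigmaA N A → ℝ) (hJ : IsJacobian m Jm)
    (gLip : ℝ) (hgLip : ∀ i : Fin N, LipWithD (dTheta θ) gLip fun x => (Jm i x)⁻¹)
    (μ₀ : Measure (SigmaA N A × K)) (hprob : IsProbabilityMeasure μ₀)
    (hinv : μ₀.map (skew G) = μ₀) (hS : MemSPair m θ μ₀ 0) :
    (μ₀.fst ≪ m ∧ lipDisint m θ μ₀ < ⊤) ∧
      lipDisint m θ μ₀ ≤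
        ENNReal.ofReal (max (H * θ + θ * (N : ℝ) * gLip) 2 / (1 - θ)) := by
  have hC2 : (2 : ℝ) ≤ max (H * θ + θ * (N : ℝ) * gLip) 2 := le_max_right _ _
  have hC1 : H * θ + θ * (N : ℝ) * gLip ≤ max (H * θ + θ * (N : ℝ) * gLip) 2 := le_max_left _ _
  set C : ℝ := max (H * θ + θ * (N : ℝ) * gLip) 2
  have hθ : 0 < 1 - θ := by linarith
  suffices hmain : lipDisint m θ μ₀ ≤ ENNReal.ofReal (C / (1 - θ)) from
    ⟨⟨hS.1.1, lt_of_le_of_lt hmain ENNReal.ofReal_lt_top⟩, hmain⟩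
  have hG : Measurable G := measurable_snd.comp hGm
  have hfst : μ₀.fst = m := by
    obtain ⟨⟨hac, -⟩, -, ψ, hψ, hψL⟩ := hS
    refine fst_eq hθ0 hθ1 hminv hPF hr0 hr1 hgap ?_ hac (ψ := ψ) ?_ hψL
    · have e : μ₀.fst.map shift = (μ₀.map (skew G)).fst := by
        rw [Measure.fst, Measure.fst, Measure.map_map measurable_shift measurable_fst,
          Measure.map_map measurable_fst hGm]
        rfl
      rw [e, hinv]
    · have hz : (0 : Measure (SigmaA N A × K)).fst = 0 := by simp [Measure.fst]
      refine hψ.trans ?_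
      unfold phiPair
      rw [hz]
      filter_upwards [Measure.rnDeriv_zero m] with x hx
      rw [hx]; simp
  have hLD : ∀ i, LipD (dTheta θ) fun x => (Jm i x)⁻¹ := fun i => ⟨gLip, hgLip i⟩
  have hm' : ∀ i, Measurable fun x => (Jm i x)⁻¹ := fun i => lipD_measurable hθ0 hθ1 (hLD i)
  have hQ : ∀ᵐ x ∂m, ∑ i, wt Jm i x = 1 ∧ μ₀.condKernel x = ∑ i, ENNReal.ofReal (wt Jm i x) •
        (μ₀.condKernel (pre i x)).map (fun z => G (pre i x, z)) := by
    filter_upwards [sum_wt hminv hJ hm', fiber_formula hminv hGm hJ hm'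
      (fun i => lipD_bdd hθ0 hθ1 (hLD i)) hinv hfst] with x h1 h2
    exact ⟨h1, h2⟩
  have hgood := ae_all_iff.2 fun n => ae_goodSet hJ hQ n
  have hd : m.compProd μ₀.condKernel = μ₀ := by
    have := μ₀.disintegrate μ₀.condKernel
    rwa [hfst] at this
  have hT : IsDisint m μ₀ (fun x => μ₀.condKernel x) := by
    refine ⟨fun E hE => ?_, fun E hE => ProbabilityTheory.Kernel.measurable_coe _ hE⟩
    conv_lhs => rw [← hd, Measure.compProd_apply hE]
    rfl
  refine (iInf_le _ ⟨_, hT⟩).trans ?_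
  refine essSup_le_of_ae_le _ ?_
  have hp1 : ∀ᵐ p ∂(m.prod m), ∀ n, goodSet (fun x => ∑ i, wt Jm i x = 1 ∧
      μ₀.condKernel x = ∑ i, ENNReal.ofReal (wt Jm i x) •
        (μ₀.condKernel (pre i x)).map (fun z => G (pre i x, z))) n p.1 :=
    Measure.quasiMeasurePreserving_fst.ae hgood
  have hp2 : ∀ᵐ p ∂(m.prod m), ∀ n, goodSet (fun x => ∑ i, wt Jm i x = 1 ∧
      μ₀.condKernel x = ∑ i, ENNReal.ofReal (wt Jm i x) •
        (μ₀.condKernel (pre i x)).map (fun z => G (pre i x, z))) n p.2 :=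
    Measure.quasiMeasurePreserving_snd.ae hgood
  filter_upwards [hp1, hp2] with p hx hy
  obtain ⟨x, y⟩ := p
  simp only at hx hy
  by_cases hxy : x = y
  · subst hxy
    simp [wDist]
  have hpos := dT_pos hθ0 hθ1 hxy
  show wDist (μ₀.condKernel x) (μ₀.condKernel y) / ENNReal.ofReal (dTheta θ x y) ≤ _
  rw [ENNReal.div_le_iff (ENNReal.ofReal_pos.2 hpos).ne' ENNReal.ofReal_ne_top,
    ← ENNReal.ofReal_mul (by positivity)]
  refine iSup_le fun g => ENNReal.ofReal_le_ofReal ?_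
  obtain ⟨g, hgl, -⟩ := g
  have hg' : ∀ z w, |g z - g w| ≤ 1 * dist z w := fun z w => by
    simpa [Real.dist_eq] using hgl.dist_le_mul z w
  have ht : Filter.Tendsto (fun n : ℕ => 1 * (C / (1 - θ) * dTheta θ x y + 2 * α ^ n))
      Filter.atTop (nhds (C / (1 - θ) * dTheta θ x y)) := by
    have := (((tendsto_pow_atTop_nhds_zero_of_lt_one hα0.le hα1).const_mul 2).const_add
      (C / (1 - θ) * dTheta θ x y)).const_mul 1
    simpa using this
  exact ge_of_tendsto' ht fun n => main_est hθ0 hθ1 hdiam hG hα0 hα1 hG1 hG2 hgLip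
    μ₀.condKernel hC2 hC1 n x y (hx n) (hy n) 1 zero_le_one g hg'

end RDS
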